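/- Let A be a unital C*-algebra, n,m ≥ 1, q ∈ ℂ with |q| < 1, and let v_1,…,v_{n+m} ∈ A satisfy the Cuntz–Toeplitz relations. With Q̃ = Σ_{i=1}^n v_i v_i*, w̃_r = v_{n+r}·((1−Q̃) + (1−|q|²)^{1/2} Q̃), and w_r = Σ_{k≥0} q^k Σ_{μ ∈ {1,…,n}^k} v_μ w̃_r v_μ* (a norm-convergent series), one has (1 − Q̃) w_r = w̃_r for every r = 1,…,m. -/

import Mathlib

open scoped BigOperators

/-- Product `v_{μ_1} ⋯ v_{μ_k}` associated to a word `μ ∈ {1,…,n}^k`. -/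
noncomputable def wordProd {A : Type*} [Monoid A] {n k : ℕ} (s : Fin n → A)
    (μ : Fin k → Fin n) : A :=
  (List.ofFn fun i => s (μ i)).prod

/-!
The Cuntz–Toeplitz relations for `s` make `Φ x = ∑ i, s i * x * star (s i)` a *-endomorphism,
hence a contraction, and its `k`-th power is the sum over words of length `k`. Since `Φ` is
multiplicative, `(1 - Φ 1) * Φ y = Φ y - Φ (1 * y) = 0`, so left multiplication by
`1 - Q = 1 - Φ 1` annihilates every term of `∑ c k • Φ ^ k x` with `k ≥ 1`.
-/

theorem one_sub_map_one_mul_map {F A B : Type*} [NonAssocSemiring A] [NonAssocRing B]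
    [FunLike F A B] [MulHomClass F A B] (φ : F) (a : A) : (1 - φ 1) * φ a = 0 := by
  rw [sub_mul, one_mul, ← map_mul, one_mul, sub_self]

theorem summable_smul_starAlgHom_pow_apply {A : Type*} [NonUnitalCStarAlgebra A] {c : ℕ → ℂ}
    (hc : Summable c) (φ : A →⋆ₙₐ[ℂ] A) (x : A) : Summable fun k => c k • (φ ^ k) x :=
  .of_norm_bounded (hc.norm.mul_right ‖x‖) fun k => by
    rw [norm_smul]
    gcongr
    exact NonUnitalStarAlgHom.norm_apply_le (φ ^ k) x

theorem one_sub_map_one_mul_tsum_smul_pow_apply {A : Type*} [CStarAlgebra A] {c : ℕ → ℂ}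
    (hc : Summable c) (φ : A →⋆ₙₐ[ℂ] A) (x : A) :
    (1 - φ 1) * ∑' k, c k • (φ ^ k) x = c 0 • ((1 - φ 1) * x) := by
  have mul_term_succ_eq_zero (k : ℕ) : (1 - φ 1) * (c (k + 1) • (φ ^ (k + 1)) x) = 0 := by
    rw [mul_smul_comm, pow_succ']
    exact smul_eq_zero_of_right _ (one_sub_map_one_mul_map φ ((φ ^ k) x))
  have hsum := summable_smul_starAlgHom_pow_apply hc φ x
  rw [← hsum.tsum_mul_left, tsum_eq_single 0]
  · rw [pow_zero, NonUnitalStarAlgHom.one_apply, mul_smul_comm]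
  · rintro (_ | k) hk
    · exact absurd rfl hk
    · exact mul_term_succ_eq_zero k

theorem wordProd_cons {A : Type*} [Monoid A] {n k : ℕ} (s : Fin n → A) (i : Fin n)
    (μ : Fin k → Fin n) :
    wordProd s (Fin.cons i μ : Fin (k + 1) → Fin n) = s i * wordProd s μ := by
  simp [wordProd, List.ofFn_succ]

/-- The Cuntz–Toeplitz relations `s_i* s_j = δ_{ij} 1`: the `s i` are isometries with mutually
orthogonal ranges. -/
def IsCuntzToeplitz {ι A : Type*} [DecidableEq ι] [MulZeroOneClass A] [Star A]
    (s : ι → A) : Prop :=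
  ∀ i j, star (s i) * s j = if i = j then 1 else 0

namespace IsCuntzToeplitz

section Family

variable {ι A : Type*} [DecidableEq ι] {s : ι → A}

theorem comp_injective {κ : Type*} [DecidableEq κ] [MulZeroOneClass A] [Star A]
    (hs : IsCuntzToeplitz s) {e : κ → ι} (he : Function.Injective e) :
    IsCuntzToeplitz (s ∘ e) := fun i j => by
  simpa only [Function.comp_apply, he.eq_iff] using hs (e i) (e j)

theorem sum_conj_mul_sum_conj [Semiring A] [Star A] [Fintype ι] (hs : IsCuntzToeplitz s)
    (x y : A) :
    (∑ i, s i * x * star (s i)) * ∑ j, s j * y * star (s j) =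
      ∑ i, s i * (x * y) * star (s i) := by
  have conj_mul_conj (i j : ι) : s i * x * star (s i) * (s j * y * star (s j)) =
      if i = j then s i * (x * y) * star (s j) else 0 := by
    calc s i * x * star (s i) * (s j * y * star (s j))
        = s i * x * (star (s i) * s j) * (y * star (s j)) := by simp only [mul_assoc]
      _ = if i = j then s i * (x * y) * star (s j) else 0 := by
        rw [hs i j]; split_ifs <;> simp only [mul_assoc, mul_one, mul_zero, zero_mul]
  simp only [Finset.sum_mul_sum, conj_mul_conj, Finset.sum_ite_eq, Finset.mem_univ, if_true]

/-- The *-endomorphism `x ↦ ∑ i, s_i x s_i*` of a star algebra attached to a finite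
Cuntz–Toeplitz family. It is not unital in general: it maps `1` to the sum of the range
projections of the `s i`. -/
def canonicalEndomorphism (R : Type*) [CommSemiring R] [Semiring A] [StarRing A] [Algebra R A]
    [Fintype ι] (hs : IsCuntzToeplitz s) : A →⋆ₙₐ[R] A where
  toFun x := ∑ i, s i * x * star (s i)
  map_smul' c x := by simp [Finset.smul_sum]
  map_zero' := by simp
  map_add' x y := by simp [mul_add, add_mul, Finset.sum_add_distrib]
  map_mul' x y := (hs.sum_conj_mul_sum_conj x y).symm
  map_star' x := by simp [star_sum, mul_assoc]

theorem canonicalEndomorphism_apply (R : Type*) [CommSemiring R] [Semiring A] [StarRing A]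
    [Algebra R A] [Fintype ι] (hs : IsCuntzToeplitz s) (x : A) :
    hs.canonicalEndomorphism R x = ∑ i, s i * x * star (s i) :=
  rfl

end Family

theorem canonicalEndomorphism_pow_apply (R : Type*) {A : Type*} [CommSemiring R] [Semiring A]
    [StarRing A] [Algebra R A] {n : ℕ} {s : Fin n → A} (hs : IsCuntzToeplitz s) (k : ℕ) (x : A) :
    (hs.canonicalEndomorphism R ^ k) x =
      ∑ μ : Fin k → Fin n, wordProd s μ * x * star (wordProd s μ) := by
  induction k with
  | zero => simp [wordProd]
  | succ k ih =>
    calc (hs.canonicalEndomorphism R ^ (k + 1)) x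
        = ∑ i, s i * (hs.canonicalEndomorphism R ^ k) x * star (s i) := by
          rw [pow_succ']
          exact hs.canonicalEndomorphism_apply R _
      _ = ∑ i, ∑ μ : Fin k → Fin n, wordProd s (Fin.cons i μ : Fin (k + 1) → Fin n) * x *
            star (wordProd s (Fin.cons i μ : Fin (k + 1) → Fin n)) := by
          simp only [ih, wordProd_cons, star_mul, Finset.mul_sum, Finset.sum_mul, mul_assoc]
      _ = ∑ μ : Fin (k + 1) → Fin n, wordProd s μ * x * star (wordProd s μ) := by
          rw [← (Fin.consEquiv fun _ => Fin n).sum_comp, Fintype.sum_prod_type]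
          rfl

end IsCuntzToeplitz

theorem stmt_8_general {A : Type*} [CStarAlgebra A] {n : ℕ} {s : Fin n → A}
    (hs : IsCuntzToeplitz s) {c : ℕ → ℂ} (hc : Summable c) (x : A) :
    Summable (fun k => c k • ∑ μ : Fin k → Fin n, wordProd s μ * x * star (wordProd s μ)) ∧
    (1 - ∑ i, s i * star (s i)) *
        (∑' k, c k • ∑ μ : Fin k → Fin n, wordProd s μ * x * star (wordProd s μ)) =
      c 0 • ((1 - ∑ i, s i * star (s i)) * x) := by
  have map_one_eq : hs.canonicalEndomorphism ℂ 1 = ∑ i, s i * star (s i) := by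
    simp only [IsCuntzToeplitz.canonicalEndomorphism_apply, mul_one]
  simp only [← hs.canonicalEndomorphism_pow_apply ℂ, ← map_one_eq]
  exact ⟨summable_smul_starAlgHom_pow_apply hc _ x, one_sub_map_one_mul_tsum_smul_pow_apply hc _ x⟩

theorem stmt_8 {A : Type*} [NormedRing A] [StarRing A] [CStarRing A]
    [NormedAlgebra ℂ A] [StarModule ℂ A] [CompleteSpace A]
    {n m : ℕ} (hn : 1 ≤ n) (hm : 1 ≤ m) (q : ℂ) (hq : ‖q‖ < 1)
    (v : Fin (n + m) → A)
    (hct : ∀ i j : Fin (n + m), star (v i) * v j = if i = j then 1 else 0)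
    (Q : A) (hQ : Q = ∑ i : Fin n, v (Fin.castAdd m i) * star (v (Fin.castAdd m i)))
    (wt : Fin m → A)
    (hwt : ∀ r, wt r = v (Fin.natAdd n r) *
      ((1 - Q) + ((Real.sqrt (1 - ‖q‖ ^ 2) : ℝ) : ℂ) • Q))
    (f : Fin m → ℕ → A)
    (hf : ∀ r k, f r k = q ^ k • ∑ μ : Fin k → Fin n,
      wordProd (fun i => v (Fin.castAdd m i)) μ * wt r *
        star (wordProd (fun i => v (Fin.castAdd m i)) μ)) :
    (∀ r : Fin m, Summable (f r)) ∧
    (∀ r : Fin m, (1 - Q) * (∑' k, f r k) = wt r) := by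
  let _ : CStarAlgebra A := { }
  have hs : IsCuntzToeplitz fun i : Fin n => v (Fin.castAdd m i) :=
    IsCuntzToeplitz.comp_injective hct (Fin.castAdd_injective n m)
  have summable_and_mul_tsum (r : Fin m) :=
    stmt_8_general hs (summable_geometric_of_norm_lt_one hq) (wt r)
  simp only [← hf, ← hQ, pow_zero, one_smul] at summable_and_mul_tsum
  have Q_mul_v (r : Fin m) : Q * v (Fin.natAdd n r) = 0 := by
    have castAdd_ne_natAdd (i : Fin n) : Fin.castAdd m i ≠ Fin.natAdd n r := by
      simp only [ne_eq, Fin.ext_iff, Fin.val_castAdd, Fin.val_natAdd]; lia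
    simp only [hQ, Finset.sum_mul, mul_assoc, hct, castAdd_ne_natAdd, if_false, mul_zero,
      Finset.sum_const_zero]
  have Q_mul_wt (r : Fin m) : Q * wt r = 0 := by rw [hwt, ← mul_assoc, Q_mul_v, zero_mul]
  exact ⟨fun r => (summable_and_mul_tsum r).1, fun r => by
    rw [(summable_and_mul_tsum r).2, sub_mul, Q_mul_wt, one_mul, sub_zero]⟩
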